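/- Let f : ℝ^d → ℝ^d satisfy f(0) = 0, be Lipschitz continuous with constant C_L > 0, and be strongly monotone with constant ω_f > 0, i.e. ⟨f(x) − f(y), x − y⟩ ≥ ω_f |x − y|² for all x, y ∈ ℝ^d. Let τ > 0, Δt > 0, ε₀ > 0 and ε_s > ε_∞ be real constants, let (Ω, μ) be a measure space, and let W be a finite-dimensional linear subspace of L²(μ; ℝ^d). Then for any P_prev ∈ W and E ∈ L²(μ; ℝ^d) there exists a unique P ∈ W such that τ⟨(P − P_prev)/Δt, Ψ⟩ + ⟨f∘P, Ψ⟩ = ε₀(ε_s − ε_∞)⟨E, Ψ⟩ for every Ψ ∈ W. -/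

import Mathlib

open MeasureTheory
open scoped RealInnerProductSpace

theorem zarantonello_aux {H : Type*} [NormedAddCommGroup H] [InnerProductSpace ℝ H]
    [CompleteSpace H] (A : H → H) (L m : ℝ) (hm : 0 < m) (hL : m < L)
    (hLip : ∀ x y, ‖A x - A y‖ ≤ L * ‖x - y‖)
    (hmono : ∀ x y, m * ‖x - y‖ ^ 2 ≤ ⟪A x - A y, x - y⟫) :
    ∃ x, A x = 0 := by
  have hLpos : 0 < L := hm.trans hL
  set ρ : ℝ := m / L ^ 2 with hρ
  have hρpos : 0 < ρ := by positivity
  set k : ℝ := Real.sqrt (1 - m ^ 2 / L ^ 2) with hk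
  have hq : m ^ 2 / L ^ 2 < 1 := by
    rw [div_lt_one (by positivity)]; nlinarith
  have hq0 : 0 < m ^ 2 / L ^ 2 := by positivity
  have hk2 : k ^ 2 = 1 - m ^ 2 / L ^ 2 := Real.sq_sqrt (by linarith)
  have hk0 : 0 ≤ k := Real.sqrt_nonneg _
  have hk1 : k < 1 := by nlinarith
  have hc : ContractingWith ⟨k, hk0⟩ (fun x => x - ρ • A x) := by
    refine ⟨by exact_mod_cast hk1, LipschitzWith.of_dist_le_mul fun x y => ?_⟩
    rw [dist_eq_norm, dist_eq_norm]
    change _ ≤ k * ‖x - y‖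
    have e : x - ρ • A x - (y - ρ • A y) = (x - y) - ρ • (A x - A y) := by
      rw [smul_sub]; abel
    refine (pow_le_pow_iff_left₀ (norm_nonneg _) (by positivity) two_ne_zero).1 ?_
    rw [e, norm_sub_sq_real, mul_pow, hk2, inner_smul_right, norm_smul, mul_pow,
      Real.norm_of_nonneg hρpos.le, real_inner_comm]
    have h1 : ‖A x - A y‖ ^ 2 ≤ L ^ 2 * ‖x - y‖ ^ 2 := by
      rw [← mul_pow]; gcongr; exact hLip x y
    have h2 := mul_le_mul_of_nonneg_left (hmono x y) hρpos.le
    have h3 := mul_le_mul_of_nonneg_left h1 (sq_nonneg ρ)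
    have e1 : ρ * m = m ^ 2 / L ^ 2 := by rw [hρ]; ring
    have e2 : ρ ^ 2 * L ^ 2 = m ^ 2 / L ^ 2 := by rw [hρ]; field_simp
    rw [← mul_assoc, e1] at h2
    rw [← mul_assoc, e2] at h3
    linarith
  have hfix := hc.fixedPoint_isFixedPt
  refine ⟨hc.fixedPoint, ?_⟩
  have h : hc.fixedPoint - ρ • A hc.fixedPoint = hc.fixedPoint := hfix
  rw [sub_eq_self, smul_eq_zero] at h
  exact h.resolve_left hρpos.ne'

theorem galerkin_aux {H : Type*} [NormedAddCommGroup H] [InnerProductSpace ℝ H]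
    (W : Submodule ℝ H) [FiniteDimensional ℝ W] (A : H → H) (L m : ℝ) (hm : 0 < m) (hL : m < L)
    (hLip : ∀ x y, ‖A x - A y‖ ≤ L * ‖x - y‖)
    (hmono : ∀ x y, m * ‖x - y‖ ^ 2 ≤ ⟪A x - A y, x - y⟫) :
    ∃! x, x ∈ W ∧ ∀ w ∈ W, ⟪A x, w⟫ = 0 := by
  haveI : CompleteSpace W := FiniteDimensional.complete ℝ W
  have key : ∀ (x : H) (w : W), ⟪W.orthogonalProjectionOnto x, w⟫ = ⟪x, (w : H)⟫ := fun x w => by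
    simp
  obtain ⟨x, hx⟩ := zarantonello_aux (fun u : W => W.orthogonalProjectionOnto (A u)) L m hm hL
    (fun x y => by
      rw [← map_sub]
      exact (W.norm_orthogonalProjectionOnto_apply_le _).trans (hLip x y))
    (fun x y => by
      rw [← map_sub, key]
      exact hmono x y)
  refine ⟨x, ⟨x.2, fun w hw => ?_⟩, ?_⟩
  · have := key (A x) ⟨w, hw⟩
    rw [hx, inner_zero_left] at this
    exact this.symm
  · rintro y ⟨hy, hy'⟩
    have h1 := key (A x) ⟨y - x, W.sub_mem hy x.2⟩
    rw [hx, inner_zero_left] at h1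
    have h2 := hy' (y - x) (W.sub_mem hy x.2)
    have h3 := hmono y x
    rw [inner_sub_left, h2] at h3
    simp only at h1
    rw [← h1] at h3
    have : ‖y - x‖ ^ 2 = 0 := le_antisymm (by nlinarith) (sq_nonneg _)
    exact sub_eq_zero.1 (norm_eq_zero.1 (pow_eq_zero_iff two_ne_zero |>.1 this))


/-- Theorem 6: unique solvability of the fully discrete Galerkin polarization
equation in a finite-dimensional subspace `W` of `L²(μ; ℝ^d)`. -/
theorem stmt_3 (d : ℕ)
    (f : EuclideanSpace ℝ (Fin d) → EuclideanSpace ℝ (Fin d))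
    (hf0 : f 0 = 0)
    (C_L : ℝ) (hCL : 0 < C_L)
    (hLip : ∀ x y : EuclideanSpace ℝ (Fin d), ‖f x - f y‖ ≤ C_L * ‖x - y‖)
    (ωf : ℝ) (hωf : 0 < ωf)
    (hmono : ∀ x y : EuclideanSpace ℝ (Fin d),
      ωf * ‖x - y‖ ^ 2 ≤ ⟪f x - f y, x - y⟫)
    (τ Δt ε₀ εs εinf : ℝ) (hτ : 0 < τ) (hΔt : 0 < Δt) (hε₀ : 0 < ε₀) (hε : εinf < εs)
    {Ω : Type*} [MeasurableSpace Ω] (μ : Measure Ω)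
    (W : Submodule ℝ (Lp (EuclideanSpace ℝ (Fin d)) 2 μ))
    (hW : FiniteDimensional ℝ W)
    (Pprev : Lp (EuclideanSpace ℝ (Fin d)) 2 μ) (hPprev : Pprev ∈ W)
    (E : Lp (EuclideanSpace ℝ (Fin d)) 2 μ) :
    ∃! P : Lp (EuclideanSpace ℝ (Fin d)) 2 μ, P ∈ W ∧
      ∀ Ψ ∈ W,
        τ * ⟪Δt⁻¹ • (P - Pprev), Ψ⟫ + (∫ x, ⟪f (P x), Ψ x⟫ ∂μ)
          = ε₀ * (εs - εinf) * ⟪E, Ψ⟫ := by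
  have hl : LipschitzWith ⟨C_L, hCL.le⟩ f := LipschitzWith.of_dist_le_mul fun x y => by
    rw [dist_eq_norm, dist_eq_norm]; exact hLip x y
  set F : Lp (EuclideanSpace ℝ (Fin d)) 2 μ → Lp (EuclideanSpace ℝ (Fin d)) 2 μ :=
    hl.compLp hf0 with hF
  have hFl : ∀ x y, ‖F x - F y‖ ≤ C_L * ‖x - y‖ := fun x y => hl.norm_compLp_sub_le hf0 x y
  have hFi : ∀ P Ψ : Lp (EuclideanSpace ℝ (Fin d)) 2 μ,
      (∫ x, ⟪f (P x), Ψ x⟫ ∂μ) = ⟪F P, Ψ⟫ := fun P Ψ => by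
    rw [L2.inner_def]
    refine integral_congr_ae ?_
    filter_upwards [hl.coeFn_compLp hf0 P] with x hx
    rw [hF, hx]; rfl
  have hFm : ∀ x y, ωf * ‖x - y‖ ^ 2 ≤ ⟪F x - F y, x - y⟫ := fun x y => by
    rw [← real_inner_self_eq_norm_sq, L2.inner_def, L2.inner_def, ← integral_const_mul]
    refine integral_mono_ae ((L2.integrable_inner _ _).const_mul _) (L2.integrable_inner _ _) ?_
    filter_upwards [hl.coeFn_compLp hf0 x, hl.coeFn_compLp hf0 y, Lp.coeFn_sub x y,
      Lp.coeFn_sub (F x) (F y)] with a h1 h2 h3 h4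
    rw [h3, h4, Pi.sub_apply, Pi.sub_apply, hF, h1, h2, real_inner_self_eq_norm_sq]
    exact hmono _ _
  set c := τ * Δt⁻¹ with hc
  have hcpos : 0 < c := by positivity
  have main := galerkin_aux W
    (fun P => c • (P - Pprev) + F P - (ε₀ * (εs - εinf)) • E) (c + C_L + ωf) ωf hωf
    (by linarith)
    (fun x y => by
      have e : c • (x - Pprev) + F x - (ε₀ * (εs - εinf)) • E
          - (c • (y - Pprev) + F y - (ε₀ * (εs - εinf)) • E) = c • (x - y) + (F x - F y) := by
        module
      rw [e]
      refine (norm_add_le _ _).trans ?_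
      rw [norm_smul, Real.norm_of_nonneg hcpos.le]
      nlinarith [hFl x y, norm_nonneg (x - y)])
    (fun x y => by
      have e : c • (x - Pprev) + F x - (ε₀ * (εs - εinf)) • E
          - (c • (y - Pprev) + F y - (ε₀ * (εs - εinf)) • E) = c • (x - y) + (F x - F y) := by
        module
      rw [e, inner_add_left, real_inner_smul_left, real_inner_self_eq_norm_sq]
      have := hFm x y
      have : 0 ≤ c * ‖x - y‖ ^ 2 := by positivity
      linarith)
  refine (existsUnique_congr fun P => and_congr_right fun _ => forall₂_congr fun Ψ _ => ?_).1 main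
  rw [hFi, inner_sub_left, inner_add_left, real_inner_smul_left, real_inner_smul_left,
    real_inner_smul_left, sub_eq_zero, hc, mul_assoc]
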